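/- Let T be a QMS with a faithful normal invariant state and assume N(T) = ⊕_{i∈I} p_i N(T) p_i with (p_i) mutually orthogonal central minimal projections fixed by T (p_i ∈ F(T)), and F(T) ⊆ N(T). Then for every T-invariant state σ and all i ≠ j one has p_i σ p_j = 0. -/

import Mathlib

open Filter MeasureTheory

/-- Trace of an operator on the finite-dimensional space `ℂ^d`. -/
noncomputable def trE (d : ℕ)
    (a : EuclideanSpace ℂ (Fin d) →L[ℂ] EuclideanSpace ℂ (Fin d)) : ℂ :=
  LinearMap.trace ℂ (EuclideanSpace ℂ (Fin d)) a.toLinearMap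

/-- Complete positivity of a linear map on `B(ℂ^d)`. -/
def IsCompletelyPositiveE (d : ℕ)
    (T : (EuclideanSpace ℂ (Fin d) →L[ℂ] EuclideanSpace ℂ (Fin d)) →ₗ[ℂ]
      (EuclideanSpace ℂ (Fin d) →L[ℂ] EuclideanSpace ℂ (Fin d))) : Prop :=
  ∀ (n : ℕ) (a b : Fin n → (EuclideanSpace ℂ (Fin d) →L[ℂ] EuclideanSpace ℂ (Fin d))),
    (∑ i, ∑ j, star (b i) * T (star (a i) * a j) * b j).IsPositive

/-- A nonzero subspace that is invariant under a commuting family of endomorphisms, each of which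
is unipotent on it, contains a nonzero common fixed vector. -/
lemma exists_common_fixed_of_unipotent {K M κ : Type*} [Field K] [AddCommGroup M] [Module K M]
    [FiniteDimensional K M] (f : κ → Module.End K M) (hf : ∀ i j, Commute (f i) (f j))
    (W : Submodule K M) (hW : W ≠ ⊥) (hinv : ∀ i, ∀ x ∈ W, f i x ∈ W)
    (hnil : ∀ i, ∀ x ∈ W, ∃ k : ℕ, ((f i - 1) ^ k) x = 0) :
    ∃ v ≠ 0, ∀ i, f i v = v := by
  let S : Set (Submodule K M) := {U | U ≤ W ∧ U ≠ ⊥ ∧ ∀ i, ∀ x ∈ U, f i x ∈ U}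
  obtain ⟨U, ⟨hUW, hU, hUinv⟩, hmin⟩ := wellFounded_lt.has_min S ⟨W, le_rfl, hW, hinv⟩
  obtain ⟨v, hvU, hv⟩ := U.exists_mem_ne_zero_of_ne_bot hU
  refine ⟨v, hv, fun i ↦ ?_⟩
  suffices hle : ¬ (U ⊓ LinearMap.ker (f i - 1) < U) by
    have heq : U ⊓ LinearMap.ker (f i - 1) = U := eq_of_le_of_not_lt inf_le_left hle
    have hmem : v ∈ LinearMap.ker (f i - 1) := (heq.ge hvU).2
    simpa [sub_eq_zero] using hmem
  refine hmin _ ⟨inf_le_left.trans hUW, ?_, fun j x hx ↦ ⟨hUinv j x hx.1, ?_⟩⟩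
  · classical
    have hex := hnil i v (hUW hvU)
    have hpow : ∀ k : ℕ, ((f i - 1) ^ k) v ∈ U := by
      intro k
      induction k with
      | zero => simpa
      | succ k ih =>
        rw [pow_succ', Module.End.mul_apply]
        simpa using U.sub_mem (hUinv i _ ih) ih
    have hpos : Nat.find hex ≠ 0 := fun h0 ↦ hv (by simpa [h0] using Nat.find_spec hex)
    obtain ⟨k, hk⟩ := Nat.exists_eq_succ_of_ne_zero hpos
    have hzero := Nat.find_spec hex
    rw [hk, Nat.succ_eq_add_one, pow_succ', Module.End.mul_apply] at hzero
    exact (Submodule.ne_bot_iff _).2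
      ⟨_, ⟨hpow k, hzero⟩, Nat.find_min hex (hk ▸ Nat.lt_succ_self k)⟩
  · have hcomm : Commute (f i - 1) (f j) := (hf i j).sub_left (Commute.one_left _)
    have hx2 : (f i - 1) x = 0 := hx.2
    change (f i - 1) (f j x) = 0
    rw [← Module.End.mul_apply, hcomm.eq, Module.End.mul_apply, hx2, map_zero]

/-- A commuting family of endomorphisms of a finite-dimensional space that leaves a nonzero linear
functional invariant has a nonzero common fixed vector. -/
lemma exists_common_fixed_of_invariant_functional {K M κ : Type*} [Field K] [IsAlgClosed K]
    [AddCommGroup M] [Module K M] [FiniteDimensional K M] (f : κ → Module.End K M)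
    (hf : ∀ i j, Commute (f i) (f j)) (φ : M →ₗ[K] K) (hφ : φ ≠ 0)
    (hinv : ∀ i x, φ (f i x) = φ x) :
    ∃ v ≠ 0, ∀ i, f i v = v := by
  have htop := Module.End.iSup_iInf_maxGenEigenspace_eq_top_of_forall_mapsTo f
    (fun i j μ ↦ Module.End.mapsTo_maxGenEigenspace_of_comm (hf j i) μ)
    (fun i ↦ Module.End.iSup_maxGenEigenspace_eq_top (f i))
  obtain ⟨χ, hχ⟩ : ∃ χ : κ → K, ¬ (⨅ i, (f i).maxGenEigenspace (χ i)) ≤ LinearMap.ker φ := by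
    by_contra! hall
    exact hφ (LinearMap.ker_eq_top.1 (top_le_iff.1 (htop ▸ iSup_le hall)))
  obtain ⟨u, hu, hφu⟩ := SetLike.not_le_iff_exists.1 hχ
  have hpow : ∀ i (k : ℕ), φ (((f i - χ i • 1) ^ k) u) = (1 - χ i) ^ k * φ u := by
    intro i k
    induction k with
    | zero => simp
    | succ k ih =>
      rw [pow_succ', Module.End.mul_apply, LinearMap.sub_apply, map_sub, hinv]
      simp [ih, pow_succ']
      ring
  have hone : ∀ i, χ i = 1 := by
    intro i
    obtain ⟨k, hk⟩ := (Module.End.mem_maxGenEigenspace _ _ _).1 ((Submodule.mem_iInf _).1 hu i)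
    have h0 := hpow i k
    rw [hk, map_zero, eq_comm, mul_eq_zero] at h0
    exact (sub_eq_zero.1 (eq_zero_of_pow_eq_zero (h0.resolve_right hφu))).symm
  refine exists_common_fixed_of_unipotent f hf (⨅ i, (f i).maxGenEigenspace (χ i))
    (fun h ↦ hχ (h ▸ bot_le)) (fun i x hx ↦ ?_) (fun i x hx ↦ ?_)
  · rw [Submodule.mem_iInf] at hx ⊢
    exact fun j ↦ Module.End.mapsTo_maxGenEigenspace_of_comm (hf j i) _ (hx j)
  · have hxi := (Module.End.mem_maxGenEigenspace _ _ _).1 ((Submodule.mem_iInf _).1 hx i)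
    simpa [hone i] using hxi

lemma eq_star_of_isSelfAdjoint_add {A : Type*} [AddCommGroup A] [StarAddMonoid A] [Module ℂ A]
    [StarModule ℂ A] {a b : A} (h : IsSelfAdjoint (a + b))
    (hI : IsSelfAdjoint (Complex.I • a + (-Complex.I) • b)) : b = star a := by
  have h1 : star a + star b = a + b := by rw [← star_add, h.star_eq]
  have h2 : (-Complex.I) • star a + Complex.I • star b = Complex.I • a + (-Complex.I) • b := by
    have h3 := hI.star_eq
    rwa [star_add, star_smul, star_smul, star_neg, Complex.star_def, Complex.conj_I,
      neg_neg] at h3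
  have h4 : (2 * Complex.I) • b = (2 * Complex.I) • star a := by
    have h5 : (2 * Complex.I) • b - (2 * Complex.I) • star a = Complex.I • (a + b) -
        (Complex.I • a + (-Complex.I) • b) - (2 * Complex.I) • star a := by module
    rw [← sub_eq_zero, h5, ← h1, ← h2]
    module
  exact smul_right_injective A (mul_ne_zero two_ne_zero Complex.I_ne_zero) h4

namespace IsCompletelyPositiveE

variable {d : ℕ}
  {T : (EuclideanSpace ℂ (Fin d) →L[ℂ] EuclideanSpace ℂ (Fin d)) →ₗ[ℂ]
    (EuclideanSpace ℂ (Fin d) →L[ℂ] EuclideanSpace ℂ (Fin d))}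

lemma map_star_mul_self_isPositive (hT : IsCompletelyPositiveE d T)
    (x : EuclideanSpace ℂ (Fin d) →L[ℂ] EuclideanSpace ℂ (Fin d)) :
    (T (star x * x)).IsPositive := by
  simpa using hT 1 (fun _ ↦ x) (fun _ ↦ 1)

lemma isSelfAdjoint_map_add_star (hT : IsCompletelyPositiveE d T)
    (x : EuclideanSpace ℂ (Fin d) →L[ℂ] EuclideanSpace ℂ (Fin d)) :
    IsSelfAdjoint (T x + T (star x)) := by
  have h := ((hT.map_star_mul_self_isPositive (1 + x)).isSelfAdjoint.sub
    (hT.map_star_mul_self_isPositive 1).isSelfAdjoint).sub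
    (hT.map_star_mul_self_isPositive x).isSelfAdjoint
  have hstar : star (1 + x) = 1 + star x := (star_add 1 x).trans (by rw [star_one])
  have heq : T (star (1 + x) * (1 + x)) - T (star 1 * 1) - T (star x * x) =
      T x + T (star x) := by
    rw [← map_add, ← map_sub, ← map_sub, hstar, star_one]
    congr 1
    noncomm_ring
  exact heq ▸ h

lemma map_star (hT : IsCompletelyPositiveE d T)
    (x : EuclideanSpace ℂ (Fin d) →L[ℂ] EuclideanSpace ℂ (Fin d)) :
    T (star x) = star (T x) := by
  have h := hT.isSelfAdjoint_map_add_star (Complex.I • x)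
  rw [star_smul, map_smul, map_smul, Complex.star_def, Complex.conj_I] at h
  exact eq_star_of_isSelfAdjoint_add
    (A := EuclideanSpace ℂ (Fin d) →L[ℂ] EuclideanSpace ℂ (Fin d)) (hT.isSelfAdjoint_map_add_star x) h

/-- A projection fixed by a completely positive map absorbs the left complement. -/
lemma one_sub_mul_map_mul_eq_zero (hT : IsCompletelyPositiveE d T)
    {p : EuclideanSpace ℂ (Fin d) →L[ℂ] EuclideanSpace ℂ (Fin d)} (hsa : IsSelfAdjoint p)
    (hpp : p * p = p) (hfix : T p = p)
    (x : EuclideanSpace ℂ (Fin d) →L[ℂ] EuclideanSpace ℂ (Fin d)) :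
    (1 - p) * T (p * x) = 0 := by
  have hsub : star (1 - p) = 1 - p := (star_sub 1 p).trans (by rw [star_one, hsa.star_eq])
  set Y := (1 - p) * T (p * x) with hY
  set Z := T (star x * x)
  have hYs : star Y = T (star x * p) * (1 - p) := by
    rw [hY, star_mul, ← hT.map_star, star_mul, hsa.star_eq, hsub]
  have hpos : ∀ l : ℝ, ((-2 * l : ℂ) • (Y * star Y) + ((l : ℂ) ^ 2) •
      (Y * Z * star Y)).IsPositive := by
    intro l
    have h := hT 2 ![p, x] ![1 - p, -(l : ℂ) • star Y]
    convert h using 1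
    have h0 : (1 - p) * p = 0 := by rw [sub_mul, one_mul, hpp, sub_self]
    simp only [Fin.sum_univ_two, Matrix.cons_val_zero, Matrix.cons_val_one, hsa.star_eq, hpp,
      hfix, hsub, star_smul, star_star, h0, zero_mul, ← hY]
    rw [mul_assoc ((star (-(l : ℂ))) • Y) _ (1 - p), ← hYs]
    simp only [smul_mul_assoc, mul_smul_comm, smul_smul, star_neg, Complex.star_def,
      Complex.conj_ofReal]
    module
  have hinner : ∀ v, star Y v = 0 := by
    intro v
    have hre : ∀ l : ℝ, 0 ≤ -2 * l * ‖star Y v‖ ^ 2 +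
        l ^ 2 * (inner ℂ (Z (star Y v)) (star Y v)).re := by
      intro l
      have h := (hpos l).re_inner_nonneg_left v
      have hYadj : ∀ w, inner ℂ (Y w) v = inner ℂ w (star Y v) := fun w ↦
        (ContinuousLinearMap.adjoint_inner_right Y w v).symm
      have hmul : ∀ (a b : EuclideanSpace ℂ (Fin d) →L[ℂ] EuclideanSpace ℂ (Fin d)) w,
          (a * b) w = a (b w) := fun _ _ _ ↦ rfl
      simp only [add_apply, smul_apply, inner_add_left,
        inner_smul_left, hmul, hYadj, inner_self_eq_norm_sq_to_K] at h
      simp only [map_mul, map_neg, map_pow, Complex.conj_ofReal, map_ofNat] at h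
      norm_cast at h
      simpa [← Complex.ofReal_pow, Complex.re_ofReal_mul] using h
    by_contra hne
    have hn : 0 < ‖star Y v‖ ^ 2 := by positivity
    set c := (inner ℂ (Z (star Y v)) (star Y v)).re
    have hl := hre (‖star Y v‖ ^ 2 / (|c| + 1))
    have hc : 0 < |c| + 1 := by positivity
    set l := ‖star Y v‖ ^ 2 / (|c| + 1) with hldef
    have hlpos : 0 < l := by positivity
    have hll : l * (|c| + 1) = ‖star Y v‖ ^ 2 := div_mul_cancel₀ _ hc.ne'
    nlinarith [le_abs_self c, abs_nonneg c, mul_pos hlpos hlpos, mul_pos hlpos hn,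
      mul_le_mul_of_nonneg_left (le_abs_self c) (sq_nonneg l)]
  have hstar : star Y = 0 := ContinuousLinearMap.ext hinner
  exact star_eq_zero.1 hstar

lemma map_mul_left (hT : IsCompletelyPositiveE d T) (hone : T 1 = 1)
    {p : EuclideanSpace ℂ (Fin d) →L[ℂ] EuclideanSpace ℂ (Fin d)} (hsa : IsSelfAdjoint p)
    (hpp : p * p = p) (hfix : T p = p)
    (x : EuclideanSpace ℂ (Fin d) →L[ℂ] EuclideanSpace ℂ (Fin d)) :
    T (p * x) = p * T x := by
  have h1 := hT.one_sub_mul_map_mul_eq_zero hsa hpp hfix x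
  have hsub : IsSelfAdjoint (1 - p) := (star_sub 1 p).trans (by rw [star_one, hsa.star_eq])
  have h2 := hT.one_sub_mul_map_mul_eq_zero (p := 1 - p) hsub
    (by rw [sub_mul, mul_sub p, hpp]; simp) (by rw [map_sub, hone, hfix]) x
  rw [sub_sub_cancel, sub_mul 1 p x, one_mul, map_sub, mul_sub, sub_eq_zero] at h2
  rw [sub_mul, one_mul, sub_eq_zero] at h1
  rw [h1, h2]

lemma map_mul_right (hT : IsCompletelyPositiveE d T) (hone : T 1 = 1)
    {p : EuclideanSpace ℂ (Fin d) →L[ℂ] EuclideanSpace ℂ (Fin d)} (hsa : IsSelfAdjoint p)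
    (hpp : p * p = p) (hfix : T p = p)
    (x : EuclideanSpace ℂ (Fin d) →L[ℂ] EuclideanSpace ℂ (Fin d)) :
    T (x * p) = T x * p := by
  apply star_injective
  rw [← hT.map_star, star_mul, star_mul, hsa.star_eq, hT.map_mul_left hone hsa hpp hfix,
    hT.map_star]

end IsCompletelyPositiveE

lemma eq_zero_of_forall_trE_mul_eq_zero {d : ℕ}
    {a : EuclideanSpace ℂ (Fin d) →L[ℂ] EuclideanSpace ℂ (Fin d)}
    (h : ∀ x, trE d (a * x) = 0) : a = 0 := by
  ext1 v
  have hv := h (InnerProductSpace.rankOne ℂ v (a v))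
  rw [trE, ContinuousLinearMap.mul_def, InnerProductSpace.comp_rankOne,
    InnerProductSpace.trace_rankOne] at hv
  exact inner_self_eq_zero.1 hv

/-- if the minimal central projections `pᵢ` of the atomic algebra
`N(T)` are fixed by `T`, the fixed point algebra satisfies
`F(T) ⊆ ⊕ᵢ pᵢ B(H) pᵢ`, and the Cesàro means of `T` converge to a map `E` with
range in `F(T)`, then every `T`-invariant state `σ` satisfies `pᵢ σ pⱼ = 0`
for `i ≠ j`. -/
theorem off_diagonal_blocks_of_invariant_state_vanish
    (d : ℕ) (ι : Type) [Fintype ι]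
    (T : ℝ → (EuclideanSpace ℂ (Fin d) →L[ℂ] EuclideanSpace ℂ (Fin d)) →ₗ[ℂ]
      (EuclideanSpace ℂ (Fin d) →L[ℂ] EuclideanSpace ℂ (Fin d)))
    (hCP : ∀ t, 0 ≤ t → IsCompletelyPositiveE d (T t))
    (hunital : ∀ t, 0 ≤ t → T t 1 = 1)
    (hzero : T 0 = LinearMap.id)
    (hsemi : ∀ t s, 0 ≤ t → 0 ≤ s → ∀ x, T (t + s) x = T t (T s x))
    -- the mutually orthogonal projections `pᵢ`, summing to `1`, fixed by `T`
    (p : ι → (EuclideanSpace ℂ (Fin d) →L[ℂ] EuclideanSpace ℂ (Fin d)))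
    (hproj : ∀ i, IsSelfAdjoint (p i) ∧ p i * p i = p i)
    (horth : ∀ i j, i ≠ j → p i * p j = 0)
    (hsum : ∑ i, p i = 1)
    (hfix : ∀ i, ∀ t, 0 ≤ t → T t (p i) = p i)
    -- `F(T) ⊆ ⊕ᵢ pᵢ B(H) pᵢ`
    (hF : ∀ x, (∀ t, 0 ≤ t → T t x = x) → x = ∑ i, p i * x * p i)
    -- the ergodic (Cesàro) projection `E` onto `F(T)`
    (E : (EuclideanSpace ℂ (Fin d) →L[ℂ] EuclideanSpace ℂ (Fin d)) →ₗ[ℂ]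
      (EuclideanSpace ℂ (Fin d) →L[ℂ] EuclideanSpace ℂ (Fin d)))
    (hEfix : ∀ x, ∀ t, 0 ≤ t → T t (E x) = E x)
    (hEces : ∀ x, Tendsto (fun t : ℝ => (t : ℂ)⁻¹ • ∫ s in (0:ℝ)..t, T s x)
      atTop (nhds (E x)))
    -- a `T`-invariant state `σ`
    (σ : EuclideanSpace ℂ (Fin d) →L[ℂ] EuclideanSpace ℂ (Fin d))
    (hσpos : σ.IsPositive) (hσtr : trE d σ = 1)
    (hσinv : ∀ t, 0 ≤ t → ∀ x, trE d (σ * T t x) = trE d (σ * x)) :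
    ∀ i j, i ≠ j → p i * σ * p j = 0 := by
  intro i j hij
  have hcorner : ∀ t, 0 ≤ t → ∀ x, T t (p j * x * p i) = p j * T t x * p i := by
    intro t ht x
    rw [(hCP t ht).map_mul_right (hunital t ht) (hproj i).1 (hproj i).2 (hfix i t ht),
      (hCP t ht).map_mul_left (hunital t ht) (hproj j).1 (hproj j).2 (hfix j t ht)]
  let C : Module.End ℂ (EuclideanSpace ℂ (Fin d) →L[ℂ] EuclideanSpace ℂ (Fin d)) :=
    LinearMap.mulLeft ℂ (p j) ∘ₗ LinearMap.mulRight ℂ (p i)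
  have hC : ∀ x, C x = p j * x * p i := fun x ↦ (mul_assoc _ _ _).symm
  let f : Option {t : ℝ // 0 ≤ t} →
      Module.End ℂ (EuclideanSpace ℂ (Fin d) →L[ℂ] EuclideanSpace ℂ (Fin d)) :=
    fun o ↦ o.elim C fun t ↦ T t
  have hCT : ∀ t : {t : ℝ // 0 ≤ t}, Commute C (T t) := fun t ↦ LinearMap.ext fun x ↦ by
    rw [Module.End.mul_apply, Module.End.mul_apply, hC, hC, hcorner t t.2]
  have hf : ∀ a b, Commute (f a) (f b) := by
    rintro (_ | t) (_ | s)
    · exact Commute.refl _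
    · exact hCT s
    · exact (hCT t).symm
    · refine LinearMap.ext fun x ↦ ?_
      change T t (T s x) = T s (T t x)
      rw [← hsemi t s t.2 s.2, ← hsemi s t s.2 t.2, add_comm]
  let φ : (EuclideanSpace ℂ (Fin d) →L[ℂ] EuclideanSpace ℂ (Fin d)) →ₗ[ℂ] ℂ :=
    { toFun := fun x ↦ trE d (σ * (p j * x * p i))
      map_add' := fun x y ↦ by simp [trE, mul_add, add_mul]
      map_smul' := fun c x ↦ by simp [trE] }
  have hφ : ∀ x, φ x = trE d (σ * (p j * x * p i)) := fun _ ↦ rfl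
  have hφinv : ∀ a x, φ (f a x) = φ x := by
    rintro (_ | t) x
    · change φ (C x) = φ x
      rw [hφ, hφ, hC]
      congr 2
      simp only [mul_assoc, (hproj i).2]
      rw [← mul_assoc (p j) (p j), (hproj j).2]
    · change φ (T t x) = φ x
      rw [hφ, hφ, ← hcorner t t.2, hσinv t t.2]
  have hφzero : φ = 0 := by
    by_contra hne
    obtain ⟨v, hv, hvfix⟩ := exists_common_fixed_of_invariant_functional f hf φ hne hφinv
    have hvC : p j * v * p i = v := hC v ▸ hvfix none
    apply hv
    rw [hF v fun t ht ↦ hvfix (some ⟨t, ht⟩)]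
    refine Finset.sum_eq_zero fun k _ ↦ ?_
    rw [← hvC]
    rcases eq_or_ne k j with rfl | hkj
    · rw [mul_assoc, mul_assoc _ (p i) (p k), horth i k hij, mul_zero, mul_zero]
    · rw [← mul_assoc, ← mul_assoc, horth k j hkj, zero_mul, zero_mul, zero_mul]
  refine eq_zero_of_forall_trE_mul_eq_zero fun x ↦ ?_
  have hx : trE d (σ * (p j * x * p i)) = 0 := by rw [← hφ, hφzero, LinearMap.zero_apply]
  have hcyc : trE d (p i * (σ * p j * x)) = trE d (σ * p j * x * p i) :=
    LinearMap.trace_mul_comm ℂ _ _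
  simpa only [mul_assoc] using hcyc.trans (by simpa only [mul_assoc] using hx)
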